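/- For every n ≥ 2, the number of crystallized linear chord diagrams with n chords having exactly n − 1 short chords is R_{n,n−1} = n(n−1)/2, the (n−1)-th triangular number. -/

import Mathlib

namespace ChordBubbles

/-- A linear chord diagram with `n` chords: a fixed-point-free involution of `Fin (2*n)`. -/
def IsDiagram (n : ℕ) (f : Equiv.Perm (Fin (2 * n))) : Prop :=
  (∀ i, f (f i) = i) ∧ ∀ i, f i ≠ i

/-- Vertex `i` is an endpoint of a short chord (a chord joining adjacent vertices). -/
def ShortEnd (n : ℕ) (f : Equiv.Perm (Fin (2 * n))) (i : Fin (2 * n)) : Prop :=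
  (f i).val = i.val + 1 ∨ (f i).val + 1 = i.val

/-- `[a, b]` delimits a bubble: a maximal nonempty interval of vertices none of which is an
endpoint of a short chord. -/
def IsBubble (n : ℕ) (f : Equiv.Perm (Fin (2 * n))) (a b : ℕ) : Prop :=
  a ≤ b ∧ b < 2 * n ∧
  (∀ i : Fin (2 * n), a ≤ i.val → i.val ≤ b → ¬ ShortEnd n f i) ∧
  (a = 0 ∨ ∃ j : Fin (2 * n), j.val + 1 = a ∧ ShortEnd n f j) ∧
  (b + 1 = 2 * n ∨ ∃ j : Fin (2 * n), j.val = b + 1 ∧ ShortEnd n f j)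

/-- The size (number of vertices) of the bubble `[a, b]`. -/
def bubbleSize (a b : ℕ) : ℕ := b + 1 - a

/-- The number of bridges of the bubble `[a, b]` under the diagram `f`: the number of chords
joining a vertex inside the bubble to one outside it. -/
noncomputable def bridges (n : ℕ) (f : Equiv.Perm (Fin (2 * n))) (a b : ℕ) : ℕ :=
  Nat.card {i : Fin (2 * n) // (a ≤ i.val ∧ i.val ≤ b) ∧ ¬ (a ≤ (f i).val ∧ (f i).val ≤ b)}

/-- `N n q b` : the number of pairs (diagram, bubble) where the diagram has `n` chords and the
bubble has size `q` and exactly `b` bridges. -/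
noncomputable def N (n q b : ℕ) : ℕ :=
  Nat.card {p : Equiv.Perm (Fin (2 * n)) × ℕ × ℕ //
    IsDiagram n p.1 ∧ IsBubble n p.1 p.2.1 p.2.2 ∧
    bubbleSize p.2.1 p.2.2 = q ∧ bridges n p.1 p.2.1 p.2.2 = b}

/-- A diagram is crystallized when all its bubbles are empty, i.e., no chord joins two vertices
lying in the same bubble. -/
def Crystallized (n : ℕ) (f : Equiv.Perm (Fin (2 * n))) : Prop :=
  ∀ a b, IsBubble n f a b → ∀ i : Fin (2 * n),
    a ≤ i.val → i.val ≤ b → ¬ (a ≤ (f i).val ∧ (f i).val ≤ b)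

/-- The number of short chords of a diagram. -/
noncomputable def shortChords (n : ℕ) (f : Equiv.Perm (Fin (2 * n))) : ℕ :=
  Nat.card {i : Fin (2 * n) // (f i).val = i.val + 1}

/-- `R n k` : the number of crystallized diagrams with `n` chords, exactly `k` of them short. -/
noncomputable def R (n k : ℕ) : ℕ :=
  Nat.card {f : Equiv.Perm (Fin (2 * n)) //
    IsDiagram n f ∧ Crystallized n f ∧ shortChords n f = k}

/-!
If `n - 1` of the `n` chords are short, then exactly one chord is long. The vertices before its left
endpoint are matched among themselves, and so are those up to and including its right endpoint;
both sets therefore have even size, so, counting from `0`, the long chord joins `2 * i` to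
`2 * j + 1` with `i < j`. Conversely each such pair extends uniquely to a diagram with no other long
chord, and this diagram is crystallized because the vertex `2 * i + 1`, lying under the long chord,
is an endpoint of a short one. Hence the diagrams correspond to the pairs `i < j < n`.
-/

open Finset Function

theorem even_card_of_involution {α : Type*} {s : Finset α} {σ : α → α} (hs : ∀ a ∈ s, σ a ∈ s)
    (hσ : ∀ a ∈ s, σ (σ a) = a) (hne : ∀ a ∈ s, σ a ≠ a) : Even #s := by
  have sum_one : ∑ _a ∈ s, (1 : ZMod 2) = 0 :=
    sum_involution (fun a _ => σ a) (fun _ _ => by decide) (fun a ha _ => hne a ha) hs hσ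
  rwa [sum_const, nsmul_one, ZMod.natCast_eq_zero_iff_even] at sum_one

section Diagram

variable {n : ℕ} {f g : Equiv.Perm (Fin (2 * n))}

instance : DecidablePred (ShortEnd n f) := fun _ => inferInstanceAs (Decidable (_ ∨ _))

theorem IsDiagram.involutive (hf : IsDiagram n f) : Involutive f := hf.1

theorem shortEnd_apply_iff (hf : Involutive f) {v : Fin (2 * n)} :
    ShortEnd n f (f v) ↔ ShortEnd n f v := by
  unfold ShortEnd
  rw [hf v]
  omega

theorem card_shortEnd (hf : Involutive f) : #{v | ShortEnd n f v} = 2 * shortChords n f := by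
  have card_left : #{v | (f v).val = v.val + 1} = shortChords n f := by
    rw [shortChords, Nat.card_eq_fintype_card, Fintype.card_subtype]
  have card_right : #{v | (f v).val + 1 = v.val} = shortChords n f := by
    rw [← card_left]
    refine card_equiv f fun v => ?_
    simp only [mem_filter_univ, hf v, eq_comm]
  have disjoint : Disjoint (univ.filter fun v => (f v).val = v.val + 1)
      (univ.filter fun v => (f v).val + 1 = v.val) :=
    disjoint_filter.2 fun v _ hleft => by omega
  calc #{v | ShortEnd n f v}
      = #{v | (f v).val = v.val + 1} + #{v | (f v).val + 1 = v.val} := by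
        rw [← card_union_of_disjoint disjoint, ← filter_or]
        rfl
    _ = 2 * shortChords n f := by rw [card_left, card_right, two_mul]

/-- The endpoints of the long (that is, not short) chords. -/
def longEnds (n : ℕ) (f : Equiv.Perm (Fin (2 * n))) : Finset (Fin (2 * n)) :=
  {v | ¬ ShortEnd n f v}

theorem mem_longEnds {v : Fin (2 * n)} : v ∈ longEnds n f ↔ ¬ ShortEnd n f v :=
  mem_filter_univ v

theorem two_mul_shortChords_add_card_longEnds (hf : Involutive f) :
    2 * shortChords n f + #(longEnds n f) = 2 * n := by
  rw [← card_shortEnd hf, longEnds, card_filter_add_card_filter_not, card_univ, Fintype.card_fin]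

theorem eq_of_forall_eq_or_shortEnd (hf : Involutive f) (hg : Involutive g)
    (hfg : ∀ v, f v = g v ∨ ShortEnd n f v ∧ ShortEnd n g v) : f = g := by
  ext1 v
  induction v using WellFoundedLT.induction with
  | ind v ih =>
    rcases hfg v with heq | ⟨hfv, hgv⟩
    · exact heq
    -- If one of `f`, `g` sends `v` to its predecessor, they agree there by induction.
    rcases hfv with hf_right | hf_left
    · rcases hgv with hg_right | hg_left
      · exact Fin.ext (hf_right.trans hg_right.symm)
      · have hfgv : f (g v) = v := by rw [ih (g v) (Fin.lt_def.2 (by omega)), hg v]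
        rw [← hf (g v), hfgv]
    · have hgfv : g (f v) = v := by rw [← ih (f v) (Fin.lt_def.2 (by omega)), hf v]
      rw [← hg (f v), hgfv]

theorem IsDiagram.even_of_initial_mapsTo (hf : IsDiagram n f) {m : ℕ} (hm : m ≤ 2 * n)
    (hmaps : ∀ v, v.val < m → (f v).val < m) : Even m := by
  have hcard : #{v : Fin (2 * n) | v.val < m} = m := by
    rw [Fin.card_filter_val_lt, min_eq_right hm]
  rw [← hcard]
  refine even_card_of_involution (fun v hv => ?_) (fun v _ => hf.1 v) fun v _ => hf.2 v
  rw [mem_filter_univ] at hv ⊢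
  exact hmaps v hv

theorem IsDiagram.crystallized_of_exists_shortEnd_between (hf : IsDiagram n f)
    (hbetween : ∀ v, ¬ ShortEnd n f v → v < f v → ∃ w, v < w ∧ w < f v ∧ ShortEnd n f w) :
    Crystallized n f := by
  rintro a b ⟨-, -, hlong, -, -⟩ v hav hvb ⟨hafv, hfvb⟩
  have hv := hlong v hav hvb
  rcases (hf.2 v).lt_or_gt with hlt | hlt
  · obtain ⟨w, hfvw, hwv, hw⟩ := hbetween (f v) (by rwa [shortEnd_apply_iff hf.involutive])
      (by rwa [hf.1 v])
    rw [hf.1 v] at hwv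
    exact hlong w (le_trans hafv hfvw.le) (le_trans hwv.le hvb) hw
  · obtain ⟨w, hvw, hwfv, hw⟩ := hbetween v hv hlt
    exact hlong w (le_trans hav hvw.le) (le_trans hwfv.le hfvb) hw

theorem IsDiagram.even_left_of_shortEnd (hf : IsDiagram n f) {x : Fin (2 * n)} (hlt : x < f x)
    (hshort : ∀ v < x, ShortEnd n f v) : Even x.val :=
  hf.even_of_initial_mapsTo x.2.le fun v hv => by
    have hne : (f v).val ≠ x.val := fun h => by
      rw [← Fin.ext h, hf.1 v] at hlt
      exact hlt.not_gt (Fin.ext h ▸ hv)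
    rcases hshort v hv with h | h <;> omega

theorem IsDiagram.odd_right_of_shortEnd (hf : IsDiagram n f) {x : Fin (2 * n)} (hlt : x < f x)
    (hshort : ∀ v < f x, v ≠ x → ShortEnd n f v) : Odd (f x).val := by
  have heven : Even ((f x).val + 1) := hf.even_of_initial_mapsTo (f x).2 fun v hv => by
    rcases (Nat.lt_succ_iff.1 hv).lt_or_eq with hlt_right | heq_right
    · rcases eq_or_ne v x with rfl | hne
      · exact Nat.lt_succ_self _
      · rcases hshort v hlt_right hne with h | h <;> omega
    · rw [Fin.ext heq_right, hf.1 x]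
      exact Nat.lt_succ_of_lt hlt
  exact Nat.not_even_iff_odd.1 (Nat.even_add_one.1 heven)

theorem IsDiagram.exists_longEnds_eq_pair (hf : IsDiagram n f) (hcard : #(longEnds n f) = 2) :
    ∃ x, x < f x ∧ longEnds n f = {x, f x} := by
  obtain ⟨x, y, hne, hends⟩ := card_eq_two.1 hcard
  obtain rfl : f x = y := by
    have hx : x ∈ longEnds n f := hends ▸ mem_insert_self x {y}
    have hmem : f x ∈ longEnds n f := by
      rwa [mem_longEnds, shortEnd_apply_iff hf.involutive, ← mem_longEnds]
    rw [hends, mem_insert, mem_singleton] at hmem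
    exact hmem.resolve_left (hf.2 x)
  rcases hne.lt_or_gt with hlt | hlt
  · exact ⟨x, hlt, hends⟩
  · exact ⟨f x, by rwa [hf.1 x], by rw [hf.1 x, hends, pair_comm]⟩

theorem IsDiagram.exists_long_chord_indices (hf : IsDiagram n f) (hcard : #(longEnds n f) = 2) :
    ∃ x i j, i < j ∧ x.val = 2 * i ∧ (f x).val = 2 * j + 1 ∧ longEnds n f = {x, f x} := by
  obtain ⟨x, hlt, hends⟩ := hf.exists_longEnds_eq_pair hcard
  have hshort (v : Fin (2 * n)) (hx : v ≠ x) (hfx : v ≠ f x) : ShortEnd n f v := by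
    by_contra hlong
    rw [← mem_longEnds, hends, mem_insert, mem_singleton] at hlong
    exact hlong.elim hx hfx
  obtain ⟨i, hi⟩ := (hf.even_left_of_shortEnd hlt fun v hv =>
    hshort v hv.ne (hv.trans hlt).ne).two_dvd
  obtain ⟨j, hj⟩ := hf.odd_right_of_shortEnd hlt fun v hv hne => hshort v hne hv.ne
  have hnot_adjacent : (f x).val ≠ x.val + 1 := fun h =>
    mem_longEnds.1 (hends ▸ mem_insert_self x {f x}) (Or.inl h)
  exact ⟨x, i, j, by omega, hi, hj, hends⟩

end Diagram

section LongChordDiagram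

/-- The partner of vertex `v` in the matching whose only long chord joins `2 * i` to `2 * j + 1`:
under the long chord the short chords start at odd vertices, elsewhere at even ones. -/
def partner (i j v : ℕ) : ℕ :=
  if v = 2 * i then 2 * j + 1
  else if v = 2 * j + 1 then 2 * i
  else if v % 2 = 1 ↔ 2 * i < v ∧ v < 2 * j + 1 then v + 1
  else v - 1

variable {i j n : ℕ}

theorem partner_lt (hij : i < j) (hj : j < n) {v : ℕ} (hv : v < 2 * n) :
    partner i j v < 2 * n := by
  unfold partner
  split_ifs <;> omega

theorem partner_ne (i j v : ℕ) : partner i j v ≠ v := by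
  unfold partner
  split_ifs <;> omega

theorem partner_partner (hij : i < j) (v : ℕ) : partner i j (partner i j v) = v := by
  unfold partner
  split_ifs <;> omega

theorem partner_adjacent_iff (hij : i < j) (v : ℕ) :
    (partner i j v = v + 1 ∨ partner i j v + 1 = v) ↔ v ≠ 2 * i ∧ v ≠ 2 * j + 1 := by
  unfold partner
  split_ifs <;> omega

/-- The diagram with `n` chords whose only long chord joins `2 * i` to `2 * j + 1`. -/
def longChordDiagram (hij : i < j) (hj : j < n) : Equiv.Perm (Fin (2 * n)) :=
  Involutive.toPerm (fun v => ⟨partner i j v, partner_lt hij hj v.2⟩)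
    fun v => Fin.ext (partner_partner hij v)

theorem val_longChordDiagram_apply (hij : i < j) (hj : j < n) (v : Fin (2 * n)) :
    (longChordDiagram hij hj v).val = partner i j v :=
  rfl

theorem isDiagram_longChordDiagram (hij : i < j) (hj : j < n) :
    IsDiagram n (longChordDiagram hij hj) :=
  ⟨fun v => Fin.ext (partner_partner hij v), fun v h => partner_ne i j v (Fin.ext_iff.1 h)⟩

theorem shortEnd_longChordDiagram_iff (hij : i < j) (hj : j < n) {v : Fin (2 * n)} :
    ShortEnd n (longChordDiagram hij hj) v ↔ v.val ≠ 2 * i ∧ v.val ≠ 2 * j + 1 :=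
  partner_adjacent_iff hij v

theorem longEnds_longChordDiagram (hij : i < j) (hj : j < n) :
    longEnds n (longChordDiagram hij hj) = {⟨2 * i, by omega⟩, ⟨2 * j + 1, by omega⟩} := by
  ext v
  simp only [mem_longEnds, shortEnd_longChordDiagram_iff, mem_insert, mem_singleton, Fin.ext_iff]
  omega

theorem crystallized_longChordDiagram (hij : i < j) (hj : j < n) :
    Crystallized n (longChordDiagram hij hj) := by
  refine (isDiagram_longChordDiagram hij hj).crystallized_of_exists_shortEnd_between
    fun v hv hlt => ⟨⟨2 * i + 1, by omega⟩, ?_⟩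
  rw [shortEnd_longChordDiagram_iff] at hv ⊢
  rw [Fin.lt_def, val_longChordDiagram_apply] at hlt
  simp only [Fin.lt_def, val_longChordDiagram_apply]
  unfold partner at hlt ⊢
  split_ifs at hlt ⊢ <;> omega

theorem shortChords_longChordDiagram (hij : i < j) (hj : j < n) :
    shortChords n (longChordDiagram hij hj) = n - 1 := by
  have hcount := two_mul_shortChords_add_card_longEnds
    (isDiagram_longChordDiagram hij hj).involutive
  rw [longEnds_longChordDiagram, card_pair (by rw [Ne, Fin.mk.injEq]; omega)] at hcount
  omega

theorem longChordDiagram_inj {i' j' : ℕ} {hij : i < j} {hj : j < n} {hij' : i' < j'}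
    {hj' : j' < n} :
    longChordDiagram hij hj = longChordDiagram hij' hj' ↔ i = i' ∧ j = j' := by
  refine ⟨fun h => ?_, by rintro ⟨rfl, rfl⟩; rfl⟩
  have hends (v : Fin (2 * n)) :
      v.val ≠ 2 * i ∧ v.val ≠ 2 * j + 1 ↔ v.val ≠ 2 * i' ∧ v.val ≠ 2 * j' + 1 := by
    rw [← shortEnd_longChordDiagram_iff hij hj, h, shortEnd_longChordDiagram_iff]
  have hleft := hends ⟨2 * i, by omega⟩
  have hright := hends ⟨2 * j + 1, by omega⟩
  dsimp only at hleft hright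
  omega

theorem IsDiagram.exists_eq_longChordDiagram {f : Equiv.Perm (Fin (2 * n))} (hf : IsDiagram n f)
    (hcard : #(longEnds n f) = 2) :
    ∃ (i j : ℕ) (hij : i < j) (hj : j < n), longChordDiagram hij hj = f := by
  obtain ⟨x, i, j, hij, hx, hfx, hends⟩ := hf.exists_long_chord_indices hcard
  have hj : j < n := by omega
  have hg := isDiagram_longChordDiagram hij hj
  have hgx : longChordDiagram hij hj x = f x :=
    Fin.ext (by rw [val_longChordDiagram_apply, hx, hfx, partner, if_pos rfl])
  refine ⟨i, j, hij, hj, eq_of_forall_eq_or_shortEnd hg.involutive hf.involutive fun v => ?_⟩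
  by_cases hv : v ∈ longEnds n f
  · left
    rw [hends, mem_insert, mem_singleton] at hv
    rcases hv with rfl | rfl
    · exact hgx
    · rw [hf.1 x, ← hgx, hg.1 x]
  · right
    refine ⟨?_, not_not.1 (mem_longEnds.not.1 hv)⟩
    rw [hends, mem_insert, mem_singleton, Fin.ext_iff, Fin.ext_iff] at hv
    rw [shortEnd_longChordDiagram_iff]
    omega

/-- The parametrization, by the pairs `i < j < n`, of the diagrams counted by `R n (n - 1)`. -/
def ofPair (n : ℕ) (p : (j : Fin n) × Fin j) : {f : Equiv.Perm (Fin (2 * n)) //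
    IsDiagram n f ∧ Crystallized n f ∧ shortChords n f = n - 1} :=
  ⟨longChordDiagram p.2.2 p.1.2, isDiagram_longChordDiagram _ _, crystallized_longChordDiagram _ _,
    shortChords_longChordDiagram _ _⟩

theorem ofPair_injective (n : ℕ) : Injective (ofPair n) := by
  rintro ⟨⟨j, hj⟩, ⟨i, hi⟩⟩ ⟨⟨j', hj'⟩, ⟨i', hi'⟩⟩ h
  have hperm : longChordDiagram hi hj = longChordDiagram hi' hj' := congrArg Subtype.val h
  obtain ⟨rfl, rfl⟩ := longChordDiagram_inj.1 hperm
  rfl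

theorem ofPair_surjective (hn : 1 ≤ n) : Surjective (ofPair n) := by
  rintro ⟨f, hf, -, hshort⟩
  have hcard : #(longEnds n f) = 2 := by
    have hcount := two_mul_shortChords_add_card_longEnds hf.involutive
    omega
  obtain ⟨i, j, hij, hj, rfl⟩ := hf.exists_eq_longChordDiagram hcard
  exact ⟨⟨⟨j, hj⟩, ⟨i, hij⟩⟩, rfl⟩

end LongChordDiagram

/-- The number of crystallized diagrams with `n` chords and exactly `n-1` short chords is the
`(n-1)`-st triangular number `n(n-1)/2`. -/
theorem R_n_pred (n : ℕ) (hn : 2 ≤ n) : R n (n - 1) = n * (n - 1) / 2 := by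
  have ofPair_bijective : Bijective (ofPair n) :=
    ⟨ofPair_injective n, ofPair_surjective (by omega)⟩
  calc R n (n - 1) = Nat.card ((j : Fin n) × Fin j) :=
        (Nat.card_eq_of_bijective (ofPair n) ofPair_bijective).symm
    _ = ∑ j : Fin n, (j : ℕ) := by simp only [Nat.card_sigma, Nat.card_fin]
    _ = ∑ j ∈ range n, j := Fin.sum_univ_eq_sum_range (fun j => j) n
    _ = n * (n - 1) / 2 := sum_range_id n

end ChordBubbles
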